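/- Let ψ : ℝ → ℝ be a function and g : ℝ³ → ℝ a bounded function such that g(x,y,t) - g(γ(x,y,t)) = ψ(t) for all (x,y,t) ∈ ℝ³. Then ψ = 0 identically. (Hence no nonzero closed 1-form p*(ψ)θ pulled back from the base circle is exact in the complex of co-invariant forms, which makes the first co-invariant cohomology group of the hyperbolic torus infinite-dimensional.) -/

import Mathlib

/-- The flow `φ_s(x,y,t) = (x + s·λᵗ, y + a·s·λᵗ, t)` on `ℝ³`. -/
noncomputable def phi (lam a : ℝ) (s : ℝ) (p : ℝ × ℝ × ℝ) : ℝ × ℝ × ℝ :=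
  (p.1 + s * lam ^ p.2.2, p.2.1 + a * s * lam ^ p.2.2, p.2.2)

/-!
Telescoping makes the Birkhoff averages of a coboundary `g - g ∘ f` tend to zero along any orbit on
which `g` is bounded. If the coboundary is invariant under `f`, these averages equal the coboundary
itself, which therefore vanishes. Here `ψ(t)` is invariant because `γ` preserves `t`.
-/

open Bornology Filter Set Topology

theorem birkhoffAverage_comp_self {α M : Type*} (R : Type*) [DivisionSemiring R]
    [AddCommMonoid M] [Module R M] (f : α → α) (g : α → M) (n : ℕ) (x : α) :
    birkhoffAverage R f (g ∘ f) n x = birkhoffAverage R f g n (f x) := by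
  simp only [birkhoffAverage, birkhoffSum, Function.comp_apply,
    ← Function.iterate_succ_apply, ← Function.iterate_succ_apply']

theorem tendsto_birkhoffAverage_sub_comp {α E : Type*} (𝕜 : Type*) [RCLike 𝕜]
    [NormedAddCommGroup E] [NormedSpace 𝕜 E] {f : α → α} {g : α → E} {x : α}
    (hg : IsBounded (range fun n ↦ g (f^[n] x))) :
    Tendsto (birkhoffAverage 𝕜 f (g - g ∘ f) · x) atTop (𝓝 0) := by
  have hdiff := (tendsto_birkhoffAverage_apply_sub_birkhoffAverage 𝕜 hg).neg
  simpa only [birkhoffAverage_sub, Pi.sub_apply, birkhoffAverage_comp_self, neg_sub, neg_zero]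
    using hdiff

theorem tendsto_birkhoffAverage_of_comp_eq {α M : Type*} (R : Type*) [DivisionSemiring R]
    [CharZero R] [AddCommMonoid M] [TopologicalSpace M] [Module R M] {f : α → α} {g : α → M}
    (hg : g ∘ f = g) (x : α) :
    Tendsto (birkhoffAverage R f g · x) atTop (𝓝 (g x)) :=
  tendsto_const_nhds.congr' <| (eventually_ne_atTop 0).mono fun _n hn ↦
    (congrFun (birkhoffAverage_of_comp_eq R hg (Nat.cast_ne_zero.mpr hn)) x).symm

theorem sub_comp_apply_eq_zero_of_isBounded_orbit {α E : Type*} [NormedAddCommGroup E]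
    [NormedSpace ℝ E] {f : α → α} {g : α → E} {x : α}
    (hinv : (g - g ∘ f) ∘ f = g - g ∘ f) (hg : IsBounded (range fun n ↦ g (f^[n] x))) :
    (g - g ∘ f) x = 0 :=
  tendsto_nhds_unique (tendsto_birkhoffAverage_of_comp_eq ℝ hinv x)
    (tendsto_birkhoffAverage_sub_comp ℝ hg)

theorem stmt17_general {X B E : Type*} [NormedAddCommGroup E] [NormedSpace ℝ E]
    {γ : X → X} {π : X → B} {ψ : B → E} {g : X → E}
    (hπ : ∀ x, π (γ x) = π x) (hg : ∃ C : ℝ, ∀ x, ‖g x‖ ≤ C)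
    (hco : ∀ x, g x - g (γ x) = ψ (π x)) (x : X) :
    ψ (π x) = 0 := by
  obtain ⟨C, hC⟩ := hg
  have hcob : g - g ∘ γ = ψ ∘ π := funext hco
  have hinv : (ψ ∘ π) ∘ γ = ψ ∘ π := funext fun y ↦ congrArg ψ (hπ y)
  have horbit : IsBounded (range fun n ↦ g (γ^[n] x)) :=
    isBounded_iff_forall_norm_le.2 ⟨C, forall_mem_range.2 fun _ ↦ hC _⟩
  calc
    ψ (π x) = (g - g ∘ γ) x := (hco x).symm
    _ = 0 := sub_comp_apply_eq_zero_of_isBounded_orbit (hcob ▸ hinv) horbit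

theorem phi_snd_snd (lam a s : ℝ) (p : ℝ × ℝ × ℝ) : (phi lam a s p).2.2 = p.2.2 :=
  rfl

/-- Let `ψ : ℝ → ℝ` and let `g : ℝ³ → ℝ` be bounded with
`g(x,y,t) - g(γ(x,y,t)) = ψ(t)` for all `(x,y,t)`, where `γ = φ₁`. Then `ψ = 0`. -/
theorem stmt17 (lam a : ℝ) (hlam : 1 < lam)
    (ψ : ℝ → ℝ) (g : ℝ × ℝ × ℝ → ℝ)
    (hg : ∃ C : ℝ, ∀ p : ℝ × ℝ × ℝ, |g p| ≤ C)
    (hco : ∀ x y t : ℝ, g (x, y, t) - g (phi lam a 1 (x, y, t)) = ψ t) :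
    ∀ t : ℝ, ψ t = 0 := by
  intro t
  exact stmt17_general (π := fun p : ℝ × ℝ × ℝ ↦ p.2.2) (phi_snd_snd lam a 1) hg
    (fun p ↦ hco p.1 p.2.1 p.2.2) (0, 0, t)
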